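/- Let n and k be positive integers with i·n = 7k for some i ∈ {1,2,3} and 2k < n, and suppose that either n ≥ 42 or (n,k) ∈ {(28,8),(35,10),(35,15)}. Let r be a vertex of GP(n,k), let v be a neighbour of r, and let u_1, u_2 be the two distinct neighbours of v other than r. Then the branch of v through u_1 and the branch of v through u_2 intersect exactly in {v}; in particular, no vertex other than v lies on both branches of v. -/

import Mathlib

open SimpleGraph

/-- Vertices of the generalised Petersen graph: `Sum.inl j` is the outer vertex `a_j`,
`Sum.inr j` is the inner vertex `b_j`. -/
abbrev GPVertex (n : ℕ) := ZMod n ⊕ ZMod n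

/-- The defining relation of the edges of `GP(n,k)`. -/
def GPRel (n k : ℕ) : GPVertex n → GPVertex n → Prop
  | Sum.inl i, Sum.inl j => j = i + 1
  | Sum.inl i, Sum.inr j => j = i
  | Sum.inr i, Sum.inr j => j = i + (k : ZMod n)
  | _, _ => False

/-- The generalised Petersen graph `GP(n,k)`. -/
def GP (n k : ℕ) : SimpleGraph (GPVertex n) := SimpleGraph.fromRel (GPRel n k)

/-- The closed neighbourhood of a vertex. -/
def closedNbhd {V : Type*} (G : SimpleGraph V) (v : V) : Set V :=
  insert v {w | G.Adj v w}

/-- A configuration of three cops and a robber is trapped. -/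
def Trapped {V : Type*} (G : SimpleGraph V) (c₁ c₂ c₃ r : V) : Prop :=
  (G.Adj c₁ r ∨ G.Adj c₂ r ∨ G.Adj c₃ r) ∨
    ∀ v, G.Adj r v →
      (c₁ ∈ closedNbhd G v ∨ c₂ ∈ closedNbhd G v ∨ c₃ ∈ closedNbhd G v)

/-- The branch of `v` through `u`, relative to the robber position `r`. -/
def branch {V : Type*} (G : SimpleGraph V) (r v u : V) : Set V :=
  insert v {w | G.dist r w ≤ 4 ∧
    ∃ p : G.Walk r w, p.length = G.dist r w ∧ [r, v, u] <+: p.support}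

/-- The sequence of cop positions determined by an initial placement, a cop strategy,
and a sequence of robber positions. -/
def copSeq {V : Type*} {m : ℕ} (init : Fin m → V)
    (move : (Fin m → V) → V → Fin m → V) (r : ℕ → V) : ℕ → Fin m → V
  | 0 => init
  | t + 1 => move (copSeq init move r t) (r t)

/-- The cop player has a winning strategy with `m` cops on `G`. -/
def CopsWinWith {V : Type*} (G : SimpleGraph V) (m : ℕ) : Prop :=
  ∃ (init : Fin m → V) (move : (Fin m → V) → V → Fin m → V),
    (∀ c r i, move c r i = c i ∨ G.Adj (c i) (move c r i)) ∧
    ∀ r : ℕ → V, (∀ t, r (t + 1) = r t ∨ G.Adj (r t) (r (t + 1))) →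
      ∃ t i, copSeq init move r t i = r t ∨ copSeq init move r (t + 1) i = r t

/-- The cop number of a graph. -/
noncomputable def copNumber {V : Type*} (G : SimpleGraph V) : ℕ :=
  sInf {m | CopsWinWith G m}

/-!
Two distinct geodesics from `r` to the same vertex that share their first edge `rv` split after `v`
and so create a cycle of length at most `3 + 3`. It therefore suffices that `GP(n,k)` has girth at
least `7`. Unrolling a cycle of length `m ≤ 6` on the lattice `ℤ × ℤ`, with outer edges going
horizontally and inner edges vertically, gives a displacement `(x, y)` with `n ∣ x + y * k`. Such a
cycle has no two consecutive spokes and evenly many of them, hence either none or exactly two, and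
so `(x, y)` is `(±m, 0)`, `(0, ±m)`, or has both coordinates nonzero and `|x| + |y| = m - 2`.
With `d = gcd n k`, divisibility forces `d ∣ x`, which excludes `0 < |x| < d`, and for `x = 0` it
forces `n ∣ y * d`, which excludes `0 < |y| < n / d`.
-/

section Girth

variable {V : Type*} {G : SimpleGraph V}

theorem egirth_le_length_add_length {v w : V} {p q : G.Walk v w} (hp : p.IsPath) (hq : q.IsPath)
    (hne : p ≠ q) : G.egirth ≤ p.length + q.length := by
  let H : SimpleGraph V := fromEdgeSet {e | e ∈ p.edges ++ q.edges}
  have hHG : H ≤ G := by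
    intro x y hxy
    have hmem : s(x, y) ∈ p.edges ++ q.edges := ((fromEdgeSet_adj _).1 hxy).1
    exact (List.mem_append.1 hmem).elim (p.edges_subset_edgeSet ·) (q.edges_subset_edgeSet ·)
  have mem_H {x y : V} (z : G.Walk x y) (hz : z.edges ⊆ p.edges ++ q.edges) :
      ∀ e ∈ z.edges, e ∈ H.edgeSet := fun e he ↦
    (edgeSet_fromEdgeSet _).symm ▸ ⟨hz he, G.not_isDiag_of_mem_edgeSet (z.edges_subset_edgeSet he)⟩
  have hH : ¬ H.IsAcyclic := by
    intro hacyclic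
    have hp' := mem_H p (List.subset_append_left _ _)
    have hq' := mem_H q (List.subset_append_right _ _)
    have heq := congrArg Subtype.val ((hacyclic.subsingleton_path v w).elim
      ⟨p.transfer H hp', hp.transfer hp'⟩ ⟨q.transfer H hq', hq.transfer hq'⟩)
    exact hne (Walk.ext_support (by simpa using congrArg Walk.support heq))
  obtain ⟨x, c, hc⟩ : ∃ (x : V) (c : H.Walk x x), c.IsCycle := by
    simpa [IsAcyclic] using hH
  have hsub : c.edges ⊆ p.edges ++ q.edges := fun e he ↦
    ((edgeSet_fromEdgeSet _) ▸ c.edges_subset_edgeSet he).1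
  have hlen : c.length ≤ p.length + q.length := by
    simpa using (hc.edges_nodup.subperm hsub).length_le
  calc G.egirth ≤ H.egirth := egirth_anti hHG
    _ ≤ c.length := egirth_le_length hc
    _ ≤ p.length + q.length := mod_cast hlen

theorem exists_isPath_of_mem_branch {r v u w : V} (hw : w ∈ branch G r v u) (hwv : w ≠ v) :
    ∃ p : G.Walk v w, p.IsPath ∧ p.length ≤ 3 ∧ p.snd = u := by
  obtain rfl | ⟨hdist, p, hlen, hpre⟩ := hw
  · exact absurd rfl hwv
  have hpath := p.isPath_of_length_eq_dist hlen
  rcases p with _ | ⟨_, _ | ⟨hadj, p⟩⟩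
  · simp at hpre
  · simp at hpre
  · simp only [Walk.support_cons, List.cons_prefix_cons, true_and] at hpre
    obtain ⟨rfl, hpre⟩ := hpre
    refine ⟨.cons hadj p, hpath.of_cons, ?_, ?_⟩
    · simp only [Walk.length_cons] at hlen ⊢
      omega
    · rw [← p.cons_tail_support, List.cons_prefix_cons] at hpre
      simpa using hpre.1.symm

theorem branch_inter_branch_eq_singleton (hG : 7 ≤ G.egirth) {r v u₁ u₂ : V} (hne : u₁ ≠ u₂) :
    branch G r v u₁ ∩ branch G r v u₂ = {v} := by
  refine Set.Subset.antisymm ?_ (by simp [branch])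
  rintro w ⟨hw₁, hw₂⟩
  by_contra hwv
  obtain ⟨p, hp, hplen, hpsnd⟩ := exists_isPath_of_mem_branch hw₁ hwv
  obtain ⟨q, hq, hqlen, hqsnd⟩ := exists_isPath_of_mem_branch hw₂ hwv
  have hpq : p ≠ q := by
    rintro rfl
    exact hne (hpsnd.symm.trans hqsnd)
  have hlen : (7 : ℕ∞) ≤ p.length + q.length := hG.trans (egirth_le_length_add_length hp hq hpq)
  norm_cast at hlen
  omega

end Girth

section Unrolling

variable {A B : Type*} [AddGroup A] [AddGroup B]

/-- The moves along the three edges at a vertex of a generalised Petersen graph with outer and inner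
layer indexed by `A`: the letter `0` crosses a spoke, and the letters `±1` translate by `±s` on the
outer layer and by `±t` on the inner one. For `GP(n,k)` one takes `A = ZMod n`, `s = 1` and `t = k`;
for its unrolling on the lattice `A = ℤ × ℤ`, `s = (1, 0)` and `t = (0, 1)`. -/
def layerMove (s t : A) : SignType → A ⊕ A → A ⊕ A
  | 0 => Sum.swap
  | 1 => Sum.map (· + s) (· + t)
  | -1 => Sum.map (· - s) (· - t)

/-- The vertex reached from `x` after the first `j` letters of the word `w`. -/
def layerTrajectory (s t : A) (w : ℕ → SignType) (x : A ⊕ A) : ℕ → A ⊕ A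
  | 0 => x
  | j + 1 => layerMove s t (w j) (layerTrajectory s t w x j)

@[simp]
theorem layerMove_neg_layerMove (s t : A) (e : SignType) (x : A ⊕ A) :
    layerMove s t (-e) (layerMove s t e x) = x := by
  rcases e with _ | _ | _ <;> rcases x with a | a <;> simp [layerMove]

theorem map_layerMove {s t : A} {s' t' : B} {φ : A → B} (hs : ∀ a, φ (a + s) = φ a + s')
    (ht : ∀ a, φ (a + t) = φ a + t') (e : SignType) (x : A ⊕ A) :
    (layerMove s t e x).map φ φ = layerMove s' t' e (x.map φ φ) := by
  have hs_sub (a : A) : φ (a - s) = φ a - s' := by rw [eq_sub_iff_add_eq, ← hs, sub_add_cancel]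
  have ht_sub (a : A) : φ (a - t) = φ a - t' := by rw [eq_sub_iff_add_eq, ← ht, sub_add_cancel]
  rcases e with _ | _ | _ <;> rcases x with a | a <;> simp [layerMove, *]

theorem map_layerTrajectory {s t : A} {s' t' : B} {φ : A → B} (hs : ∀ a, φ (a + s) = φ a + s')
    (ht : ∀ a, φ (a + t) = φ a + t') (w : ℕ → SignType) (x : A ⊕ A) (j : ℕ) :
    (layerTrajectory s t w x j).map φ φ = layerTrajectory s' t' w (x.map φ φ) j := by
  induction j with
  | zero => rfl
  | succ j ih => rw [layerTrajectory, layerTrajectory, map_layerMove hs ht, ih]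

theorem layerTrajectory_eq_of_forall_eq_layerMove {s t : A} {m : ℕ} {w : Fin (m + 1) → SignType}
    {f : Fin (m + 1) → A ⊕ A} (hw : ∀ i, f (i + 1) = layerMove s t (w i) (f i)) (j : ℕ) :
    layerTrajectory s t (fun j ↦ w (Fin.ofNat _ j)) (f 0) j = f (Fin.ofNat _ j) := by
  induction j with
  | zero => rfl
  | succ j ih =>
    have hsucc : Fin.ofNat (m + 1) (j + 1) = Fin.ofNat (m + 1) j + 1 := by
      simp [Fin.ext_iff, Fin.val_add]
    rw [layerTrajectory, ih, hsucc, hw]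

/-- The displacements `(outer, inner)` on the lattice of the cycles of length `m ≤ 6` of a
generalised Petersen graph: the cycle either stays on one layer or consists of two spokes and a
nonempty segment on each layer. -/
def IsShortCycleDisplacement (m : ℕ) (p : ℤ × ℤ) : Prop :=
  p.1 = 0 ∧ p.2.natAbs = m ∨ p.2 = 0 ∧ p.1.natAbs = m ∨
    p.1 ≠ 0 ∧ p.2 ≠ 0 ∧ p.1.natAbs + p.2.natAbs + 2 = m
deriving Decidable

theorem isShortCycleDisplacement_of_reduced {m : ℕ} (hm : m + 1 ≤ 6) (w : Fin (m + 1) → SignType)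
    (hw : ∀ i, w (i + 1) ≠ -w i) (x : (ℤ × ℤ) ⊕ (ℤ × ℤ)) (hx : x = .inl 0 ∨ x = .inr 0)
    (hlayer : (layerTrajectory (1, 0) (0, 1) (fun j ↦ w (Fin.ofNat _ j)) x (m + 1)).isLeft
      = x.isLeft) :
    IsShortCycleDisplacement (m + 1)
      ((layerTrajectory (1, 0) (0, 1) (fun j ↦ w (Fin.ofNat _ j)) x (m + 1)).elim id id) := by
  replace hm : m ≤ 5 := by omega
  rcases hx with rfl | rfl <;> interval_cases m <;> revert w <;> decide +kernel

end Unrolling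

section GeneralizedPetersen

variable {n k : ℕ}

theorem exists_eq_layerMove_of_adj_GP {x y : GPVertex n} (h : (GP n k).Adj x y) :
    ∃ e, y = layerMove 1 (k : ZMod n) e x := by
  suffices y = layerMove 1 (k : ZMod n) 0 x ∨ y = layerMove 1 (k : ZMod n) 1 x ∨
      y = layerMove 1 (k : ZMod n) (-1) x by
    obtain h | h | h := this <;> exact ⟨_, h⟩
  have hrel : GPRel n k x y ∨ GPRel n k y x := ((fromRel_adj _ _ _).1 h).2
  rcases x with a | a <;> rcases y with b | b <;>
    simpa [layerMove, GPRel, eq_sub_iff_add_eq, eq_comm] using hrel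

theorem exists_reduced_word_of_cycle {m : ℕ} (hm : 2 ≤ m) {f : Fin (m + 1) → GPVertex n}
    (hf : Function.Injective f) (hadj : ∀ i, (GP n k).Adj (f i) (f (i + 1))) :
    ∃ w : Fin (m + 1) → SignType, (∀ i, w (i + 1) ≠ -w i) ∧
      ∀ i, f (i + 1) = layerMove 1 (k : ZMod n) (w i) (f i) := by
  choose w hw using fun i ↦ exists_eq_layerMove_of_adj_GP (hadj i)
  refine ⟨w, fun i hi ↦ ?_, hw⟩
  have hback : f (i + 1 + 1) = f i := by
    rw [hw, hi, hw, layerMove_neg_layerMove]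
  have htwo : (1 + 1 : Fin (m + 1)) = 0 := by
    simpa [add_assoc] using hf hback
  have htwo_mod : 2 % (m + 1) = 0 := by simpa [Fin.ext_iff, Fin.val_add] using htwo
  rw [Nat.mod_eq_of_lt (by omega)] at htwo_mod
  omega

theorem exists_displacement_of_cycle_GP {m : ℕ} (hm : 2 ≤ m) (hm' : m + 1 ≤ 6)
    {f : Fin (m + 1) → GPVertex n} (hf : Function.Injective f)
    (hadj : ∀ i, (GP n k).Adj (f i) (f (i + 1))) :
    ∃ p : ℤ × ℤ, IsShortCycleDisplacement (m + 1) p ∧ (n : ℤ) ∣ p.1 + p.2 * k := by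
  obtain ⟨w, hreduced, hw⟩ := exists_reduced_word_of_cycle hm hf hadj
  obtain ⟨x, c, hx, hc⟩ : ∃ (x : (ℤ × ℤ) ⊕ (ℤ × ℤ)) (c : ZMod n),
      (x = .inl 0 ∨ x = .inr 0) ∧ f 0 = x.map (fun _ ↦ c) (fun _ ↦ c) := by
    rcases f 0 with c | c
    · exact ⟨.inl 0, c, .inl rfl, rfl⟩
    · exact ⟨.inr 0, c, .inr rfl, rfl⟩
  let φ : ℤ × ℤ → ZMod n := fun p ↦ c + (p.1 + p.2 * k : ℤ)
  have hφ_outer (p : ℤ × ℤ) : φ (p + (1, 0)) = φ p + 1 := by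
    simp only [φ, Prod.fst_add, Prod.snd_add]
    push_cast
    ring
  have hφ_inner (p : ℤ × ℤ) : φ (p + (0, 1)) = φ p + k := by
    simp only [φ, Prod.fst_add, Prod.snd_add]
    push_cast
    ring
  have hφx : f 0 = x.map φ φ := by
    rcases hx with rfl | rfl <;> simpa [φ] using hc
  let y := layerTrajectory (1, 0) (0, 1) (fun j ↦ w (Fin.ofNat _ j)) x (m + 1)
  have hφy : y.map φ φ = x.map φ φ := by
    calc y.map φ φ
        = layerTrajectory 1 (k : ZMod n) (fun j ↦ w (Fin.ofNat _ j)) (x.map φ φ) (m + 1) :=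
          map_layerTrajectory hφ_outer hφ_inner _ _ _
      _ = f 0 := by rw [← hφx, layerTrajectory_eq_of_forall_eq_layerMove hw, Fin.ofNat_self]
      _ = x.map φ φ := hφx
  have hlayer : y.isLeft = x.isLeft := by simpa using congrArg Sum.isLeft hφy
  refine ⟨y.elim id id, isShortCycleDisplacement_of_reduced hm' w hreduced x hx hlayer, ?_⟩
  rw [← ZMod.intCast_zmod_eq_zero_iff_dvd]
  rcases hx with rfl | rfl <;> rcases y with p | p <;> simp_all [φ]

theorem not_dvd_of_isShortCycleDisplacement (hd : 4 ≤ n.gcd k) (hn : 7 * n.gcd k ≤ n) {m : ℕ}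
    (hm : 0 < m) (hm' : m ≤ 6) {p : ℤ × ℤ} (hp : IsShortCycleDisplacement m p) :
    ¬ (n : ℤ) ∣ p.1 + p.2 * k := by
  obtain ⟨x, y⟩ := p
  intro (hdvd : (n : ℤ) ∣ x + y * k)
  obtain ⟨rfl, (hy : y.natAbs = m)⟩ | ⟨rfl, (hx : x.natAbs = m)⟩ |
    ⟨(hx : x ≠ 0), (hy : y ≠ 0), (hxy : x.natAbs + y.natAbs + 2 = m)⟩ := hp
  · have hdvd_mul_gcd : n ∣ y.natAbs * n.gcd k := by
      rw [← Nat.gcd_mul_left]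
      refine Nat.dvd_gcd (dvd_mul_left _ _) ?_
      simpa [Int.natCast_dvd, Int.natAbs_mul] using hdvd
    have hle := Nat.le_of_dvd (Nat.mul_pos (by omega) (by omega)) hdvd_mul_gcd
    nlinarith
  · have hdvd_x : n ∣ x.natAbs := Int.natCast_dvd.1 (by simpa using hdvd)
    have hle := Nat.le_of_dvd (by omega) hdvd_x
    omega
  · have hgcd_dvd_x : n.gcd k ∣ x.natAbs := by
      have hgcd_n : (n.gcd k : ℤ) ∣ n := mod_cast Nat.gcd_dvd_left n k
      have hgcd_k : (n.gcd k : ℤ) ∣ k := mod_cast Nat.gcd_dvd_right n k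
      exact Int.natCast_dvd.1 ((dvd_add_left (hgcd_k.mul_left y)).1 (hgcd_n.trans hdvd))
    have hle := Nat.le_of_dvd (Int.natAbs_pos.2 hx) hgcd_dvd_x
    omega

theorem seven_le_egirth_GP (hd : 4 ≤ n.gcd k) (hn : 7 * n.gcd k ≤ n) : 7 ≤ (GP n k).egirth := by
  rw [le_egirth]
  intro a c hc
  by_contra! hlt
  norm_cast at hlt
  have hthree := hc.three_le_length
  obtain ⟨m, hm⟩ := Nat.exists_eq_succ_of_ne_zero (by omega : c.length ≠ 0)
  obtain ⟨f⟩ : cycleGraph (m + 1) ⊑ GP n k :=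
    (cycleGraph_isContained_iff (by omega)).2 ⟨a, c, hc, hm⟩
  have hadj (i : Fin (m + 1)) : (GP n k).Adj (f i) (f (i + 1)) := by
    refine f.toHom.map_adj (cycleGraph_adj'.2 (.inr ?_))
    rw [add_sub_cancel_left, Fin.val_one', Nat.mod_eq_of_lt (by omega)]
  obtain ⟨p, hp, hdvd⟩ :=
    exists_displacement_of_cycle_GP (by omega) (by omega) f.injective hadj
  exact not_dvd_of_isShortCycleDisplacement hd hn m.succ_pos (by omega) hp hdvd

theorem mul_gcd_eq_of_coprime {m i : ℕ} (hmi : m.Coprime i) (hik : i * n = m * k) :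
    m * n.gcd k = n := by
  rw [← Nat.gcd_mul_left, ← hik, Nat.gcd_mul_right, hmi.gcd_eq_one, one_mul]

theorem branches_intersect_in_singleton_GP_general (hd : 4 ≤ n.gcd k) (hn : 7 * n.gcd k ≤ n)
    {r v u₁ u₂ : GPVertex n} (hne : u₁ ≠ u₂) :
    branch (GP n k) r v u₁ ∩ branch (GP n k) r v u₂ = {v} :=
  branch_inter_branch_eq_singleton (seven_le_egirth_GP hd hn) hne

end GeneralizedPetersen

/-- The two branches of a neighbour `v` of the robber `r` intersect exactly in `{v}`. -/
theorem branches_intersect_in_singleton_GP (n k : ℕ)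
    (hn : 0 < n) (hk : 0 < k)
    (hi : ∃ i, i ∈ ({1, 2, 3} : Set ℕ) ∧ i * n = 7 * k)
    (h2k : 2 * k < n)
    (hbig : 42 ≤ n ∨ (n = 28 ∧ k = 8) ∨ (n = 35 ∧ k = 10) ∨ (n = 35 ∧ k = 15))
    (r v u₁ u₂ : GPVertex n) (hv : (GP n k).Adj r v)
    (hu₁ : (GP n k).Adj v u₁) (hu₂ : (GP n k).Adj v u₂)
    (hu₁r : u₁ ≠ r) (hu₂r : u₂ ≠ r) (hne : u₁ ≠ u₂) :
    branch (GP n k) r v u₁ ∩ branch (GP n k) r v u₂ = {v} := by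
  obtain ⟨i, hi, hik⟩ := hi
  have hgcd : 7 * n.gcd k = n := by
    rcases hi with rfl | rfl | rfl <;> exact mul_gcd_eq_of_coprime (by norm_num) hik
  exact branches_intersect_in_singleton_GP_general (by omega) hgcd.le hne
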